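/- Let α, ε, κ, R be positive constants and let h : (0,∞) → [0,∞) be a continuous nonnegative function such that α + ε/6 + ∫₀^∞ t·h(t) dt < κ < 1/2. Then there exists a positive absolute constant C and a function Φ : (0,∞) → ℝ, three times continuously differentiable with Φ''' locally absolutely continuous, such that: (1) Φ⁗(r) + (4/r)Φ'''(r) = −(ε/R³)·χ_{(0,R)}(r) − h(r)/r for almost every r > 0 (i.e. the radial function x ↦ Φ(|x|) on ℝ³ satisfies Δ²Φ(x) = −(ε/R³)χ_{(0,R)}(|x|) − h(|x|)/|x| a.e.); (2) Φ'(r) ≥ 0 and Φ''(r) ≥ 0 for all r > 0; (3) Φ'(r)/r ≥ Cε/R and Φ''(r) ≥ Cε/R for all r ∈ (0,R); and (4) α ≤ Φ'(r) < κ < 1/2 for all r > 0. -/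

import Mathlib

noncomputable section
open MeasureTheory Set

/-!
Let `g` be minus the right-hand side. For a radial profile on `ℝ³` the equation `Δ²Φ = -g` reads
`(r⁴ Φ‴)′ = -r⁴ g`, which is solved by `Φ‴ = -r⁻⁴ ∫₀^r s⁴ g`. Integrating from infinity for `Φ″` and
from the origin, with value `α`, for `Φ′`, and exchanging the order of integration, one gets
`Φ″ = (r⁻³ ∫₀^r s⁴ g + ∫_r^∞ s g) / 3` and
`Φ′ = α + (∫₀^r s² g) / 2 - (∫₀^r s⁴ g) / (6 r²) + (r ∫_r^∞ s g) / 3`.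
All moments here are locally absolutely continuous as soon as `s² g` is integrable. In `(Φ′)′` and
`(Φ″)′` the terms containing `g` itself cancel, so these a.e. derivatives are continuous and are
therefore derivatives everywhere.

Since `∫₀^r s⁴ g ≤ r² ∫₀^r s² g`, we have `Φ′ ≥ α + r Φ″`. Since `r ∫_r^∞ s g ≤ ∫_r^∞ s² g`, we have
`Φ′ ≤ α + (∫₀^∞ s² g) / 2`. Finally `Φ″` is decreasing, so on `(0, R)` it is at least
`(∫₀^R s⁴ g) / (3 R³) ≥ ε / (15 R)`.
-/

section AbsolutelyContinuous

variable {f f' : ℝ → ℝ} {a b : ℝ}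

lemma absolutelyContinuousOnInterval_congr {X : Type*} [PseudoMetricSpace X] {f f₁ : ℝ → X}
    (hf : AbsolutelyContinuousOnInterval f a b) (heq : EqOn f f₁ (uIcc a b)) :
    AbsolutelyContinuousOnInterval f₁ a b := by
  refine Filter.Tendsto.congr' ?_ hf
  filter_upwards [Filter.mem_inf_of_right (Filter.mem_principal_self _)] with E hE
  refine Finset.sum_congr rfl fun i hi => ?_
  rw [heq (hE.1 i hi).1, heq (hE.1 i hi).2]

lemma absolutelyContinuousOnInterval_inv_pow (ha : 0 < a) (hb : 0 < b) (n : ℕ) :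
    AbsolutelyContinuousOnInterval (fun r => (r ^ n)⁻¹) a b := by
  refine ContDiffOn.absolutelyContinuousOnInterval
    ((contDiff_id.pow n).contDiffOn.inv fun r hr => ?_)
  exact pow_ne_zero n ((lt_min ha hb).trans_le hr.1).ne'

lemma integral_eq_sub_of_ae_hasDerivAt (hf : AbsolutelyContinuousOnInterval f a b)
    (hd : ∀ᵐ x, x ∈ uIcc a b → HasDerivAt f (f' x) x) :
    ∫ x in a..b, f' x = f b - f a := by
  rw [← hf.integral_deriv_eq_sub]
  refine intervalIntegral.integral_congr_ae ?_
  filter_upwards [hd] with x hx hxab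
  exact (hx (uIoc_subset_uIcc hxab)).deriv.symm

variable {s : Set ℝ} {x : ℝ}

lemma continuousOn_of_absolutelyContinuousOnInterval {E : Type*} [SeminormedAddCommGroup E]
    {f : ℝ → E} (hs : IsOpen s) (hf : ∀ a ∈ s, ∀ b ∈ s, AbsolutelyContinuousOnInterval f a b) :
    ContinuousOn f s := by
  intro x hx
  obtain ⟨a, b, hxab, hnhds, hsub⟩ := exists_Icc_mem_subset_of_mem_nhds (hs.mem_nhds hx)
  have hab : a ≤ b := hxab.1.trans hxab.2
  have hcont := (hf a (hsub (left_mem_Icc.2 hab)) b (hsub (right_mem_Icc.2 hab))).continuousOn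
  rw [uIcc_of_le hab] at hcont
  exact (hcont.continuousAt hnhds).continuousWithinAt

lemma hasDerivAt_integral_of_continuousOn {E : Type*} [NormedAddCommGroup E] [NormedSpace ℝ E]
    [CompleteSpace E] {f : ℝ → E} [s.OrdConnected] (hs : IsOpen s) (hf : ContinuousOn f s)
    (ha : a ∈ s) (hx : x ∈ s) : HasDerivAt (fun y => ∫ t in a..y, f t) (f x) x :=
  intervalIntegral.integral_hasDerivAt_right
    (hf.mono (OrdConnected.uIcc_subset ‹_› ha hx)).intervalIntegrable
    (hf.stronglyMeasurableAtFilter hs x hx) (hf.continuousAt (hs.mem_nhds hx))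

lemma hasDerivAt_of_ae_hasDerivAt [s.OrdConnected] (hs : IsOpen s)
    (hf : ∀ a ∈ s, ∀ b ∈ s, AbsolutelyContinuousOnInterval f a b)
    (hd : ∀ a ∈ s, ∀ b ∈ s, ∀ᵐ x, x ∈ uIcc a b → HasDerivAt f (f' x) x)
    (hf' : ContinuousOn f' s) (hx : x ∈ s) : HasDerivAt f (f' x) x := by
  refine ((hasDerivAt_integral_of_continuousOn hs hf' hx hx).const_add (f x)).congr_of_eventuallyEq
    ?_
  filter_upwards [hs.mem_nhds hx] with y hy
  rw [integral_eq_sub_of_ae_hasDerivAt (hf x hx y hy) (hd x hx y hy), add_sub_cancel]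

lemma contDiffOn_succ_of_hasDerivAt {E : Type*} [NormedAddCommGroup E] [NormedSpace ℝ E]
    {f f' : ℝ → E} {n : ℕ} (hs : IsOpen s) (hd : ∀ x ∈ s, HasDerivAt f (f' x) x)
    (hf' : ContDiffOn ℝ n f' s) : ContDiffOn ℝ (n + 1) f s := by
  refine (contDiffOn_succ_iff_deriv_of_isOpen hs).2 ⟨?_, by simp, ?_⟩
  · exact fun x hx => (hd x hx).differentiableAt.differentiableWithinAt
  · exact hf'.congr fun x hx => (hd x hx).deriv

end AbsolutelyContinuous

section Moments

/-- The moment `∫₀^r sᵏ g(s) ds` of `g` over the ball of radius `r`. -/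
def innerMoment (g : ℝ → ℝ) (k : ℕ) (r : ℝ) : ℝ := ∫ s in (0 : ℝ)..r, s ^ k * g s

/-- The moment `∫_r^∞ sᵏ g(s) ds` of `g` over the complement of the ball of radius `r`. -/
def outerMoment (g : ℝ → ℝ) (k : ℕ) (r : ℝ) : ℝ := ∫ s in Ioi r, s ^ k * g s

variable {g : ℝ → ℝ} {j k : ℕ} {a b r : ℝ}

lemma intervalIntegrable_pow_mul (hg : IntegrableOn (fun s => s ^ k * g s) (Ioi 0)) (hkj : k ≤ j)
    (ha : 0 ≤ a) (hb : 0 ≤ b) : IntervalIntegrable (fun s => s ^ j * g s) volume a b := by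
  have hint : IntervalIntegrable (fun s => s ^ k * g s) volume a b :=
    intervalIntegrable_iff.2 (hg.mono_set fun s hs => (le_min ha hb).trans_lt hs.1)
  refine (hint.continuousOn_mul (continuous_pow (j - k)).continuousOn).congr fun s _ => ?_
  simp only [← mul_assoc, ← pow_add, Nat.sub_add_cancel hkj]

lemma integrableOn_Ioi_pow_mul (hg : IntegrableOn (fun s => s ^ k * g s) (Ioi 0)) (hjk : j ≤ k)
    (hr : 0 < r) : IntegrableOn (fun s => s ^ j * g s) (Ioi r) := by
  have hbdd : ∀ᵐ s ∂volume.restrict (Ioi r), ‖(s ^ (k - j))⁻¹‖ ≤ (r ^ (k - j))⁻¹ := by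
    filter_upwards [ae_restrict_mem measurableSet_Ioi] with s hs
    have hrs : r < s := hs
    rw [Real.norm_of_nonneg (inv_nonneg.2 (pow_nonneg (hr.trans hrs).le _))]
    gcongr
  refine IntegrableOn.congr_fun ((hg.mono_set (Ioi_subset_Ioi hr.le)).bdd_mul
    (by fun_prop) hbdd) (fun s hs => ?_) measurableSet_Ioi
  have hs₀ : s ≠ 0 := (hr.trans hs).ne'
  rw [← mul_assoc, inv_mul_eq_div, ← Nat.sub_add_cancel hjk, pow_add]
  field_simp
  simp

lemma intervalIntegrable_pow_mul_of_pos (hg : IntegrableOn (fun s => s ^ k * g s) (Ioi 0))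
    (hjk : j ≤ k) (ha : 0 < a) (hb : 0 < b) :
    IntervalIntegrable (fun s => s ^ j * g s) volume a b :=
  intervalIntegrable_iff.2
    ((integrableOn_Ioi_pow_mul hg hjk (lt_min ha hb)).mono_set Ioc_subset_Ioi_self)

lemma innerMoment_add_outerMoment (hg : IntegrableOn (fun s => s ^ k * g s) (Ioi 0))
    (hr : 0 ≤ r) : innerMoment g k r + outerMoment g k r = outerMoment g k 0 :=
  intervalIntegral.integral_interval_add_Ioi hg (hg.mono_set (Ioi_subset_Ioi hr))

lemma outerMoment_eq_sub (hg : IntegrableOn (fun s => s ^ k * g s) (Ioi 0)) (hjk : j ≤ k)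
    (ha : 0 < a) (hb : 0 < b) :
    outerMoment g j b = outerMoment g j a - ∫ s in a..b, s ^ j * g s :=
  eq_sub_of_add_eq' (intervalIntegral.integral_interval_add_Ioi
    (integrableOn_Ioi_pow_mul hg hjk ha) (integrableOn_Ioi_pow_mul hg hjk hb))

lemma absolutelyContinuousOnInterval_innerMoment
    (hg : IntegrableOn (fun s => s ^ k * g s) (Ioi 0)) (hkj : k ≤ j) (ha : 0 ≤ a) (hb : 0 ≤ b) :
    AbsolutelyContinuousOnInterval (innerMoment g j) a b := by
  have hmax : 0 ≤ max a b := ha.trans (le_max_left a b)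
  refine ((intervalIntegrable_pow_mul hg hkj le_rfl
    hmax).absolutelyContinuousOnInterval_intervalIntegral left_mem_uIcc).mono ?_
  rw [uIcc_of_le hmax]
  exact Icc_subset_Icc_left (le_min ha hb)

lemma ae_hasDerivAt_innerMoment (hg : IntegrableOn (fun s => s ^ k * g s) (Ioi 0)) (hkj : k ≤ j)
    (ha : 0 ≤ a) (hb : 0 ≤ b) :
    ∀ᵐ r, r ∈ uIcc a b → HasDerivAt (innerMoment g j) (r ^ j * g r) r := by
  have hmax : 0 ≤ max a b := ha.trans (le_max_left a b)
  filter_upwards [(intervalIntegrable_pow_mul hg hkj le_rfl hmax).ae_hasDerivAt_integral]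
    with r hderiv hr
  refine hderiv ?_ 0 left_mem_uIcc
  rw [uIcc_of_le hmax]
  exact Icc_subset_Icc_left (le_min ha hb) hr

lemma absolutelyContinuousOnInterval_outerMoment
    (hg : IntegrableOn (fun s => s ^ k * g s) (Ioi 0)) (hjk : j ≤ k) (ha : 0 < a) (hb : 0 < b) :
    AbsolutelyContinuousOnInterval (outerMoment g j) a b := by
  have hconst : AbsolutelyContinuousOnInterval (fun _ => outerMoment g j a) a b :=
    contDiffOn_const.absolutelyContinuousOnInterval
  have hprimitive := (intervalIntegrable_pow_mul_of_pos hg hjk ha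
    hb).absolutelyContinuousOnInterval_intervalIntegral left_mem_uIcc
  exact absolutelyContinuousOnInterval_congr (hconst.sub hprimitive) fun r hr =>
    (outerMoment_eq_sub hg hjk ha ((lt_min ha hb).trans_le hr.1)).symm

lemma ae_hasDerivAt_outerMoment (hg : IntegrableOn (fun s => s ^ k * g s) (Ioi 0)) (hjk : j ≤ k)
    (ha : 0 < a) (hb : 0 < b) :
    ∀ᵐ r, r ∈ uIcc a b → HasDerivAt (outerMoment g j) (-(r ^ j * g r)) r := by
  filter_upwards [(intervalIntegrable_pow_mul_of_pos hg hjk ha hb).ae_hasDerivAt_integral]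
    with r hderiv hr
  refine ((hderiv hr a left_mem_uIcc).const_sub (outerMoment g j a)).congr_of_eventuallyEq ?_
  filter_upwards [Ioi_mem_nhds ((lt_min ha hb).trans_le hr.1)] with x hx
  exact outerMoment_eq_sub hg hjk ha hx

lemma innerMoment_nonneg (hg₀ : ∀ s ∈ Ioi (0 : ℝ), 0 ≤ g s) (hr : 0 ≤ r) :
    0 ≤ innerMoment g k r := by
  rw [innerMoment, intervalIntegral.integral_of_le hr]
  exact setIntegral_nonneg measurableSet_Ioc fun s hs =>
    mul_nonneg (pow_nonneg hs.1.le k) (hg₀ s hs.1)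

lemma outerMoment_nonneg (hg₀ : ∀ s ∈ Ioi (0 : ℝ), 0 ≤ g s) (hr : 0 ≤ r) :
    0 ≤ outerMoment g k r :=
  setIntegral_nonneg measurableSet_Ioi fun s hs =>
    mul_nonneg (pow_nonneg (hr.trans_lt hs).le k) (hg₀ s (hr.trans_lt hs))

lemma innerMoment_le_pow_mul_innerMoment (hg : IntegrableOn (fun s => s ^ k * g s) (Ioi 0))
    (hg₀ : ∀ s ∈ Ioi (0 : ℝ), 0 ≤ g s) (hkj : k ≤ j) (hr : 0 ≤ r) :
    innerMoment g j r ≤ r ^ (j - k) * innerMoment g k r := by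
  rw [innerMoment, innerMoment, ← intervalIntegral.integral_const_mul]
  refine intervalIntegral.integral_mono_on_of_le_Ioo hr
    (intervalIntegrable_pow_mul hg hkj le_rfl hr)
    ((intervalIntegrable_pow_mul hg le_rfl le_rfl hr).const_mul _) fun s hs => ?_
  have hs₀ : 0 ≤ s := hs.1.le
  have hsr : s ≤ r := hs.2.le
  have hgs : 0 ≤ g s := hg₀ s hs.1
  calc s ^ j * g s = s ^ (j - k) * (s ^ k * g s) := by
        rw [← mul_assoc, ← pow_add, Nat.sub_add_cancel hkj]
    _ ≤ r ^ (j - k) * (s ^ k * g s) := by gcongr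

lemma pow_mul_outerMoment_le_outerMoment (hg : IntegrableOn (fun s => s ^ k * g s) (Ioi 0))
    (hg₀ : ∀ s ∈ Ioi (0 : ℝ), 0 ≤ g s) (hjk : j ≤ k) (hr : 0 < r) :
    r ^ (k - j) * outerMoment g j r ≤ outerMoment g k r := by
  rw [outerMoment, outerMoment, ← integral_const_mul]
  refine setIntegral_mono_on ((integrableOn_Ioi_pow_mul hg hjk hr).const_mul _)
    (integrableOn_Ioi_pow_mul hg le_rfl hr) measurableSet_Ioi fun s hs => ?_
  have hrs : r < s := hs
  have hs₀ : 0 < s := hr.trans hrs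
  have hgs : 0 ≤ g s := hg₀ s hs₀
  calc r ^ (k - j) * (s ^ j * g s) ≤ s ^ (k - j) * (s ^ j * g s) := by gcongr
    _ = s ^ k * g s := by rw [← mul_assoc, ← pow_add, Nat.sub_add_cancel hjk]

end Moments

section Multiplier

/-- The third derivative of the multiplier, obtained by integrating the equation in the form
`(r⁴ Φ‴)′ = -r⁴ g` from the origin. -/
def multiplierDeriv₃ (g : ℝ → ℝ) (r : ℝ) : ℝ := -(innerMoment g 4 r / r ^ 4)

/-- The second derivative of the multiplier: the primitive of `multiplierDeriv₃ g` vanishing at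
infinity, with the iterated integral expressed through moments. -/
def multiplierDeriv₂ (g : ℝ → ℝ) (r : ℝ) : ℝ := (innerMoment g 4 r / r ^ 3 + outerMoment g 1 r) / 3

/-- The first derivative of the multiplier: the primitive of `multiplierDeriv₂ g` with limit `α` at
the origin, with the iterated integrals expressed through moments. -/
def multiplierDeriv (α : ℝ) (g : ℝ → ℝ) (r : ℝ) : ℝ :=
  α + innerMoment g 2 r / 2 - innerMoment g 4 r / (6 * r ^ 2) + r * outerMoment g 1 r / 3

/-- The radial profile `Φ` of a solution of `Δ²Φ = -g` on `ℝ³`, normalized by `Φ(1) = 0`. -/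
def multiplier (α : ℝ) (g : ℝ → ℝ) (r : ℝ) : ℝ := ∫ t in (1 : ℝ)..r, multiplierDeriv α g t

variable {g : ℝ → ℝ} {α a b r R : ℝ}

lemma absolutelyContinuousOnInterval_multiplierDeriv₃
    (hg : IntegrableOn (fun s => s ^ 2 * g s) (Ioi 0)) (ha : 0 < a) (hb : 0 < b) :
    AbsolutelyContinuousOnInterval (multiplierDeriv₃ g) a b :=
  ((absolutelyContinuousOnInterval_innerMoment hg (by norm_num) ha.le hb.le).fun_mul
    (absolutelyContinuousOnInterval_inv_pow ha hb 4)).fun_neg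

lemma absolutelyContinuousOnInterval_multiplierDeriv₂
    (hg : IntegrableOn (fun s => s ^ 2 * g s) (Ioi 0)) (ha : 0 < a) (hb : 0 < b) :
    AbsolutelyContinuousOnInterval (multiplierDeriv₂ g) a b := by
  have hinner := (absolutelyContinuousOnInterval_innerMoment hg (j := 4) (by norm_num) ha.le
    hb.le).fun_mul (absolutelyContinuousOnInterval_inv_pow ha hb 3)
  have houter := absolutelyContinuousOnInterval_outerMoment hg (j := 1) (by norm_num) ha hb
  refine absolutelyContinuousOnInterval_congr ((hinner.fun_add houter).const_mul 3⁻¹)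
    fun r _ => ?_
  simp only [multiplierDeriv₂, div_eq_mul_inv]
  ring

lemma absolutelyContinuousOnInterval_multiplierDeriv
    (hg : IntegrableOn (fun s => s ^ 2 * g s) (Ioi 0)) (ha : 0 < a) (hb : 0 < b) :
    AbsolutelyContinuousOnInterval (multiplierDeriv α g) a b := by
  have hconst : AbsolutelyContinuousOnInterval (fun _ => α) a b :=
    contDiffOn_const.absolutelyContinuousOnInterval
  have hid : AbsolutelyContinuousOnInterval (fun r => r) a b :=
    contDiffOn_id.absolutelyContinuousOnInterval
  have hmass := absolutelyContinuousOnInterval_innerMoment hg le_rfl ha.le hb.le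
  have hinner := (absolutelyContinuousOnInterval_innerMoment hg (j := 4) (by norm_num) ha.le
    hb.le).fun_mul (absolutelyContinuousOnInterval_inv_pow ha hb 2)
  have houter := hid.fun_mul
    (absolutelyContinuousOnInterval_outerMoment hg (j := 1) (by norm_num) ha hb)
  refine absolutelyContinuousOnInterval_congr (((hconst.fun_add (hmass.const_mul 2⁻¹)).fun_sub
    (hinner.const_mul 6⁻¹)).fun_add (houter.const_mul 3⁻¹)) fun r _ => ?_
  simp only [multiplierDeriv, div_eq_mul_inv, mul_inv]
  ring

lemma ae_hasDerivAt_multiplierDeriv₃ (hg : IntegrableOn (fun s => s ^ 2 * g s) (Ioi 0))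
    (ha : 0 < a) (hb : 0 < b) :
    ∀ᵐ r, r ∈ uIcc a b →
      HasDerivAt (multiplierDeriv₃ g) (-g r - 4 / r * multiplierDeriv₃ g r) r := by
  filter_upwards [ae_hasDerivAt_innerMoment hg (j := 4) (by norm_num) ha.le hb.le]
    with r hinner hr
  have hr₀ : 0 < r := (lt_min ha hb).trans_le hr.1
  refine ((hinner hr).div (hasDerivAt_pow 4 r) (by positivity)).neg.congr_deriv ?_
  rw [multiplierDeriv₃]
  field_simp
  push_cast
  ring

lemma ae_hasDerivAt_multiplierDeriv₂ (hg : IntegrableOn (fun s => s ^ 2 * g s) (Ioi 0))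
    (ha : 0 < a) (hb : 0 < b) :
    ∀ᵐ r, r ∈ uIcc a b → HasDerivAt (multiplierDeriv₂ g) (multiplierDeriv₃ g r) r := by
  filter_upwards [ae_hasDerivAt_innerMoment hg (j := 4) (by norm_num) ha.le hb.le,
    ae_hasDerivAt_outerMoment hg (j := 1) (by norm_num) ha hb] with r hinner houter hr
  have hr₀ : 0 < r := (lt_min ha hb).trans_le hr.1
  refine ((((hinner hr).div (hasDerivAt_pow 3 r) (by positivity)).add
    (houter hr)).div_const 3).congr_deriv ?_
  rw [multiplierDeriv₃]
  field_simp
  push_cast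
  ring

lemma ae_hasDerivAt_multiplierDeriv (hg : IntegrableOn (fun s => s ^ 2 * g s) (Ioi 0))
    (ha : 0 < a) (hb : 0 < b) :
    ∀ᵐ r, r ∈ uIcc a b → HasDerivAt (multiplierDeriv α g) (multiplierDeriv₂ g r) r := by
  filter_upwards [ae_hasDerivAt_innerMoment hg le_rfl ha.le hb.le,
    ae_hasDerivAt_innerMoment hg (j := 4) (by norm_num) ha.le hb.le,
    ae_hasDerivAt_outerMoment hg (j := 1) (by norm_num) ha hb] with r hmass hinner houter hr
  have hr₀ : 0 < r := (lt_min ha hb).trans_le hr.1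
  refine (((((hmass hr).div_const 2).const_add α).sub
    ((hinner hr).div ((hasDerivAt_pow 2 r).const_mul 6) (by positivity))).add
    (((hasDerivAt_id r).mul (houter hr)).div_const 3)).congr_deriv ?_
  simp only [multiplierDeriv₂, id]
  field_simp
  push_cast
  ring

lemma continuousOn_multiplierDeriv₃ (hg : IntegrableOn (fun s => s ^ 2 * g s) (Ioi 0)) :
    ContinuousOn (multiplierDeriv₃ g) (Ioi 0) :=
  continuousOn_of_absolutelyContinuousOnInterval isOpen_Ioi fun _ ha _ hb =>
    absolutelyContinuousOnInterval_multiplierDeriv₃ hg ha hb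

lemma hasDerivAt_multiplierDeriv₂ (hg : IntegrableOn (fun s => s ^ 2 * g s) (Ioi 0))
    (hr : 0 < r) : HasDerivAt (multiplierDeriv₂ g) (multiplierDeriv₃ g r) r :=
  hasDerivAt_of_ae_hasDerivAt isOpen_Ioi
    (fun _ ha _ hb => absolutelyContinuousOnInterval_multiplierDeriv₂ hg ha hb)
    (fun _ ha _ hb => ae_hasDerivAt_multiplierDeriv₂ hg ha hb)
    (continuousOn_multiplierDeriv₃ hg) hr

lemma hasDerivAt_multiplierDeriv (hg : IntegrableOn (fun s => s ^ 2 * g s) (Ioi 0))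
    (hr : 0 < r) : HasDerivAt (multiplierDeriv α g) (multiplierDeriv₂ g r) r :=
  hasDerivAt_of_ae_hasDerivAt isOpen_Ioi
    (fun _ ha _ hb => absolutelyContinuousOnInterval_multiplierDeriv hg ha hb)
    (fun _ ha _ hb => ae_hasDerivAt_multiplierDeriv hg ha hb)
    (HasDerivAt.continuousOn fun _ hx => hasDerivAt_multiplierDeriv₂ hg hx) hr

lemma hasDerivAt_multiplier (hg : IntegrableOn (fun s => s ^ 2 * g s) (Ioi 0))
    (hr : 0 < r) : HasDerivAt (multiplier α g) (multiplierDeriv α g r) r :=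
  hasDerivAt_integral_of_continuousOn isOpen_Ioi
    (HasDerivAt.continuousOn fun _ hx => hasDerivAt_multiplierDeriv hg hx)
    (mem_Ioi.2 one_pos) hr

lemma contDiffOn_multiplier (hg : IntegrableOn (fun s => s ^ 2 * g s) (Ioi 0)) :
    ContDiffOn ℝ 3 (multiplier α g) (Ioi 0) := by
  have hderiv₂ := contDiffOn_succ_of_hasDerivAt (n := 0) isOpen_Ioi
    (fun _ hr => hasDerivAt_multiplierDeriv₂ hg hr)
    (contDiffOn_zero.2 (continuousOn_multiplierDeriv₃ hg))
  have hderiv := contDiffOn_succ_of_hasDerivAt (n := 1) isOpen_Ioi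
    (fun _ hr => hasDerivAt_multiplierDeriv (α := α) hg hr) (by simpa using hderiv₂)
  exact (contDiffOn_succ_of_hasDerivAt (n := 2) isOpen_Ioi
    (fun _ hr => hasDerivAt_multiplier hg hr) (by simpa [one_add_one_eq_two] using hderiv)).of_le
    (by norm_num)

lemma eqOn_deriv_multiplier (hg : IntegrableOn (fun s => s ^ 2 * g s) (Ioi 0)) :
    EqOn (deriv (multiplier α g)) (multiplierDeriv α g) (Ioi 0) :=
  fun _ hr => (hasDerivAt_multiplier hg hr).deriv

lemma eqOn_deriv_deriv_multiplier (hg : IntegrableOn (fun s => s ^ 2 * g s) (Ioi 0)) :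
    EqOn (deriv (deriv (multiplier α g))) (multiplierDeriv₂ g) (Ioi 0) :=
  ((eqOn_deriv_multiplier hg).deriv isOpen_Ioi).trans
    fun _ hr => (hasDerivAt_multiplierDeriv hg hr).deriv

lemma eqOn_deriv_deriv_deriv_multiplier (hg : IntegrableOn (fun s => s ^ 2 * g s) (Ioi 0)) :
    EqOn (deriv (deriv (deriv (multiplier α g)))) (multiplierDeriv₃ g) (Ioi 0) :=
  ((eqOn_deriv_deriv_multiplier hg).deriv isOpen_Ioi).trans
    fun _ hr => (hasDerivAt_multiplierDeriv₂ hg hr).deriv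

lemma multiplierDeriv₂_nonneg (hg₀ : ∀ s ∈ Ioi (0 : ℝ), 0 ≤ g s) (hr : 0 < r) :
    0 ≤ multiplierDeriv₂ g r := by
  have hinner := innerMoment_nonneg (k := 4) hg₀ hr.le
  have houter := outerMoment_nonneg (k := 1) hg₀ hr.le
  unfold multiplierDeriv₂
  positivity

lemma antitoneOn_multiplierDeriv₂ (hg : IntegrableOn (fun s => s ^ 2 * g s) (Ioi 0))
    (hg₀ : ∀ s ∈ Ioi (0 : ℝ), 0 ≤ g s) : AntitoneOn (multiplierDeriv₂ g) (Ioi 0) := by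
  have hderiv : ∀ r ∈ Ioi (0 : ℝ), HasDerivAt (multiplierDeriv₂ g) (multiplierDeriv₃ g r) r :=
    fun r hr => hasDerivAt_multiplierDeriv₂ hg hr
  refine antitoneOn_of_hasDerivWithinAt_nonpos (convex_Ioi 0) (HasDerivAt.continuousOn hderiv)
    (fun r hr => (hderiv r (interior_subset hr)).hasDerivWithinAt) fun r hr => ?_
  have hr₀ : 0 < r := interior_subset hr
  exact neg_nonpos.2 (div_nonneg (innerMoment_nonneg hg₀ hr₀.le) (by positivity))

lemma innerMoment_div_le_multiplierDeriv₂ (hg : IntegrableOn (fun s => s ^ 2 * g s) (Ioi 0))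
    (hg₀ : ∀ s ∈ Ioi (0 : ℝ), 0 ≤ g s) (hr : 0 < r) (hrR : r ≤ R) :
    innerMoment g 4 R / (3 * R ^ 3) ≤ multiplierDeriv₂ g r := by
  have hR : 0 < R := hr.trans_le hrR
  have houter := outerMoment_nonneg (k := 1) hg₀ hR.le
  calc innerMoment g 4 R / (3 * R ^ 3) = (innerMoment g 4 R / R ^ 3) / 3 := by
        rw [div_div, mul_comm]
    _ ≤ multiplierDeriv₂ g R := by
        unfold multiplierDeriv₂
        linarith
    _ ≤ multiplierDeriv₂ g r := antitoneOn_multiplierDeriv₂ hg hg₀ hr hR hrR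

lemma add_mul_multiplierDeriv₂_le_multiplierDeriv
    (hg : IntegrableOn (fun s => s ^ 2 * g s) (Ioi 0)) (hg₀ : ∀ s ∈ Ioi (0 : ℝ), 0 ≤ g s)
    (hr : 0 < r) : α + r * multiplierDeriv₂ g r ≤ multiplierDeriv α g r := by
  have hmoment : innerMoment g 4 r / r ^ 2 ≤ innerMoment g 2 r :=
    (div_le_iff₀' (by positivity)).2
      (innerMoment_le_pow_mul_innerMoment hg hg₀ (by norm_num) hr.le)
  calc α + r * multiplierDeriv₂ g r
      = multiplierDeriv α g r - (innerMoment g 2 r - innerMoment g 4 r / r ^ 2) / 2 := by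
        unfold multiplierDeriv₂ multiplierDeriv
        field_simp
        ring
    _ ≤ multiplierDeriv α g r := by linarith

lemma le_multiplierDeriv (hg : IntegrableOn (fun s => s ^ 2 * g s) (Ioi 0))
    (hg₀ : ∀ s ∈ Ioi (0 : ℝ), 0 ≤ g s) (hr : 0 < r) : α ≤ multiplierDeriv α g r :=
  (le_add_of_nonneg_right (mul_nonneg hr.le (multiplierDeriv₂_nonneg hg₀ hr))).trans
    (add_mul_multiplierDeriv₂_le_multiplierDeriv hg hg₀ hr)

lemma multiplierDeriv_le (hg : IntegrableOn (fun s => s ^ 2 * g s) (Ioi 0))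
    (hg₀ : ∀ s ∈ Ioi (0 : ℝ), 0 ≤ g s) (hr : 0 < r) :
    multiplierDeriv α g r ≤ α + outerMoment g 2 0 / 2 := by
  have hinner : 0 ≤ innerMoment g 4 r / (6 * r ^ 2) :=
    div_nonneg (innerMoment_nonneg hg₀ hr.le) (by positivity)
  have houter : r * outerMoment g 1 r ≤ outerMoment g 2 r := by
    simpa using pow_mul_outerMoment_le_outerMoment hg hg₀ one_le_two hr
  have houter₀ : 0 ≤ outerMoment g 2 r := outerMoment_nonneg hg₀ hr.le
  have hmass := innerMoment_add_outerMoment hg hr.le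
  unfold multiplierDeriv
  linarith

end Multiplier

section Source

/-- The function `g = (ε / R³) χ_{(0,R)} + h(r) / r` for which the equation is `Δ²Φ = -g`. -/
def source (ε R : ℝ) (h : ℝ → ℝ) (r : ℝ) : ℝ :=
  ε / R ^ 3 * (Ioo (0 : ℝ) R).indicator (fun _ => (1 : ℝ)) r + h r / r

variable {ε R : ℝ} {h : ℝ → ℝ}

lemma source_nonneg (hε : 0 ≤ ε) (hR : 0 ≤ R) (hh₀ : ∀ t ∈ Ioi (0 : ℝ), 0 ≤ h t) :
    ∀ r ∈ Ioi (0 : ℝ), 0 ≤ source ε R h r := fun r hr =>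
  add_nonneg (mul_nonneg (by positivity) (indicator_nonneg (fun _ _ => zero_le_one) r))
    (div_nonneg (hh₀ r hr) (le_of_lt hr))

lemma sq_mul_source (ε R : ℝ) (h : ℝ → ℝ) :
    EqOn (fun s => s ^ 2 * source ε R h s)
      (fun s => (Ioo (0 : ℝ) R).indicator (fun s => ε / R ^ 3 * s ^ 2) s + s * h s) (Ioi 0) := by
  intro s hs
  have hs₀ : s ≠ 0 := (mem_Ioi.1 hs).ne'
  by_cases hsR : s ∈ Ioo 0 R
  · simp only [source, indicator_of_mem hsR]
    field_simp
  · simp only [source, indicator_of_notMem hsR]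
    field_simp
    ring

lemma integrable_indicator_Ioo_const_mul_sq (c R : ℝ) :
    Integrable ((Ioo (0 : ℝ) R).indicator fun s => c * s ^ 2) :=
  (integrable_indicator_iff measurableSet_Ioo).2
    ((Continuous.integrableOn_Icc (by fun_prop)).mono_set Ioo_subset_Icc_self)

lemma integrableOn_sq_mul_source (hh : IntegrableOn (fun t => t * h t) (Ioi 0)) :
    IntegrableOn (fun s => s ^ 2 * source ε R h s) (Ioi 0) :=
  ((integrable_indicator_Ioo_const_mul_sq (ε / R ^ 3) R).integrableOn.add hh).congr_fun
    (sq_mul_source ε R h).symm measurableSet_Ioi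

lemma outerMoment_source (hR : 0 < R) (hh : IntegrableOn (fun t => t * h t) (Ioi 0)) :
    outerMoment (source ε R h) 2 0 = ε / 3 + ∫ t in Ioi (0 : ℝ), t * h t := by
  have hball : ∫ s in Ioi (0 : ℝ), (Ioo (0 : ℝ) R).indicator (fun s => ε / R ^ 3 * s ^ 2) s
      = ε / 3 := by
    rw [setIntegral_indicator measurableSet_Ioo, inter_eq_self_of_subset_right Ioo_subset_Ioi_self,
      ← integral_Ioc_eq_integral_Ioo, ← intervalIntegral.integral_of_le hR.le,
      intervalIntegral.integral_const_mul, integral_pow]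
    field_simp
    norm_num
  rw [outerMoment, setIntegral_congr_fun measurableSet_Ioi (sq_mul_source ε R h),
    integral_add (integrable_indicator_Ioo_const_mul_sq _ R).integrableOn hh, hball]

lemma le_innerMoment_source (hR : 0 < R) (hh₀ : ∀ t ∈ Ioi (0 : ℝ), 0 ≤ h t)
    (hh : IntegrableOn (fun t => t * h t) (Ioi 0)) :
    ε * R ^ 2 / 5 ≤ innerMoment (source ε R h) 4 R := by
  have hball : ∫ s in (0 : ℝ)..R, ε / R ^ 3 * s ^ 4 = ε * R ^ 2 / 5 := by
    rw [intervalIntegral.integral_const_mul, integral_pow]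
    field_simp
    norm_num
  rw [← hball]
  refine intervalIntegral.integral_mono_on_of_le_Ioo hR.le
    (Continuous.intervalIntegrable (by fun_prop) 0 R)
    (intervalIntegrable_pow_mul (integrableOn_sq_mul_source hh) (by norm_num) le_rfl hR.le)
    fun s hs => ?_
  have hsource : ε / R ^ 3 ≤ source ε R h s := by
    rw [source, indicator_of_mem hs, mul_one]
    exact le_add_of_nonneg_right (div_nonneg (hh₀ s hs.1) hs.1.le)
  rw [mul_comm]
  gcongr

lemma le_multiplierDeriv₂_source (hε : 0 ≤ ε) (hh₀ : ∀ t ∈ Ioi (0 : ℝ), 0 ≤ h t)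
    (hh : IntegrableOn (fun t => t * h t) (Ioi 0)) {r : ℝ} (hr : r ∈ Ioo 0 R) :
    1 / 15 * ε / R ≤ multiplierDeriv₂ (source ε R h) r := by
  have hR : 0 < R := hr.1.trans hr.2
  calc 1 / 15 * ε / R = ε * R ^ 2 / 5 / (3 * R ^ 3) := by
        field_simp
        ring
    _ ≤ innerMoment (source ε R h) 4 R / (3 * R ^ 3) := by
        gcongr
        exact le_innerMoment_source hR hh₀ hh
    _ ≤ multiplierDeriv₂ (source ε R h) r :=
        innerMoment_div_le_multiplierDeriv₂ (integrableOn_sq_mul_source hh)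
          (source_nonneg hε hR.le hh₀) hr.1 hr.2.le

end Source

theorem stmt_16_general {α ε κ R : ℝ} {h : ℝ → ℝ} (hα : 0 ≤ α) (hε : 0 ≤ ε) (hR : 0 < R)
    (hh₀ : ∀ t ∈ Ioi (0 : ℝ), 0 ≤ h t) (hh : IntegrableOn (fun t => t * h t) (Ioi 0))
    (hκ : α + ε / 6 + (∫ t in Ioi (0 : ℝ), t * h t) / 2 < κ) :
    ∃ Φ Φ4 : ℝ → ℝ,
      ContDiffOn ℝ 3 Φ (Ioi 0) ∧
      (∀ x y : ℝ, 0 < x → x ≤ y →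
        deriv (deriv (deriv Φ)) y - deriv (deriv (deriv Φ)) x = ∫ t in x..y, Φ4 t) ∧
      (∀ᵐ r : ℝ, 0 < r →
        Φ4 r + (4 / r) * deriv (deriv (deriv Φ)) r
          = -(ε / R ^ 3) * (Ioo (0 : ℝ) R).indicator (fun _ => (1 : ℝ)) r - h r / r) ∧
      (∀ r > (0 : ℝ), 0 ≤ deriv Φ r ∧ 0 ≤ deriv (deriv Φ) r) ∧
      (∀ r ∈ Ioo (0 : ℝ) R,
        1 / 15 * ε / R ≤ deriv Φ r / r ∧ 1 / 15 * ε / R ≤ deriv (deriv Φ) r) ∧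
      (∀ r > (0 : ℝ), α ≤ deriv Φ r ∧ deriv Φ r < κ) := by
  have hg := integrableOn_sq_mul_source (ε := ε) (R := R) hh
  have hg₀ := source_nonneg hε hR.le hh₀
  have hΦ₁ := eqOn_deriv_multiplier (α := α) hg
  have hΦ₂ := eqOn_deriv_deriv_multiplier (α := α) hg
  have hΦ₃ := eqOn_deriv_deriv_deriv_multiplier (α := α) hg
  refine ⟨multiplier α (source ε R h),
    fun r => -source ε R h r - 4 / r * multiplierDeriv₃ (source ε R h) r,
    contDiffOn_multiplier hg, fun x y hx hxy => ?_, .of_forall fun r hr => ?_, fun r hr => ?_,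
    fun r hr => ?_, fun r hr => ?_⟩
  · have hy : 0 < y := hx.trans_le hxy
    rw [hΦ₃ hx, hΦ₃ hy, integral_eq_sub_of_ae_hasDerivAt
      (absolutelyContinuousOnInterval_multiplierDeriv₃ hg hx hy)
      (ae_hasDerivAt_multiplierDeriv₃ hg hx hy)]
  · simp only [hΦ₃ hr, source]
    ring
  · rw [hΦ₁ hr, hΦ₂ hr]
    exact ⟨hα.trans (le_multiplierDeriv hg hg₀ hr), multiplierDeriv₂_nonneg hg₀ hr⟩
  · have hlower := le_multiplierDeriv₂_source hε hh₀ hh hr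
    rw [hΦ₁ hr.1, hΦ₂ hr.1, le_div_iff₀' hr.1]
    refine ⟨?_, hlower⟩
    linarith [mul_le_mul_of_nonneg_left hlower hr.1.le,
      add_mul_multiplierDeriv₂_le_multiplierDeriv (α := α) hg hg₀ hr.1]
  · rw [hΦ₁ hr]
    refine ⟨le_multiplierDeriv hg hg₀ hr, (multiplierDeriv_le hg hg₀ hr).trans_lt ?_⟩
    rw [outerMoment_source hR hh]
    linarith

/-- construction of the radial multiplier Φ (Lemma 6.1 of the
paper). The third derivative of Φ is locally absolutely continuous on (0,∞)
with a.e. derivative Φ4, and the radial bilaplacian equation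
`Φ⁗ + (4/r)Φ''' = -(ε/R³)χ_{(0,R)} - h(r)/r` holds almost everywhere. -/
theorem stmt_16 :
    ∃ C : ℝ, 0 < C ∧
      ∀ (α ε κ R : ℝ) (h : ℝ → ℝ),
      0 < α → 0 < ε → 0 < κ → 0 < R →
      ContinuousOn h (Ioi 0) → (∀ t ∈ Ioi (0:ℝ), 0 ≤ h t) →
      IntegrableOn (fun t => t * h t) (Ioi 0) →
      α + ε / 6 + (∫ t in Ioi (0:ℝ), t * h t) < κ → κ < 1/2 →
      ∃ (Φ Φ4 : ℝ → ℝ),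
        ContDiffOn ℝ 3 Φ (Ioi 0) ∧
        -- Φ''' is locally absolutely continuous on (0,∞) with derivative Φ4:
        (∀ x y : ℝ, 0 < x → x ≤ y →
          deriv (deriv (deriv Φ)) y - deriv (deriv (deriv Φ)) x = ∫ t in x..y, Φ4 t) ∧
        -- the equation Δ²Φ = -(ε/R³)χ_{(0,R)} - h(|x|)/|x| holds a.e. (radially):
        (∀ᵐ r : ℝ, 0 < r →
          Φ4 r + (4 / r) * deriv (deriv (deriv Φ)) r
            = -(ε / R ^ 3) * (Ioo (0:ℝ) R).indicator (fun _ => (1:ℝ)) r - h r / r) ∧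
        (∀ r > (0:ℝ), 0 ≤ deriv Φ r ∧ 0 ≤ deriv (deriv Φ) r) ∧
        (∀ r ∈ Ioo (0:ℝ) R, C * ε / R ≤ deriv Φ r / r ∧ C * ε / R ≤ deriv (deriv Φ) r) ∧
        (∀ r > (0:ℝ), α ≤ deriv Φ r ∧ deriv Φ r < κ) := by
  refine ⟨1 / 15, by norm_num, fun α ε κ R h hα hε _ hR _ hh₀ hh hκ _ =>
    stmt_16_general hα.le hε.le hR hh₀ hh ?_⟩
  linarith [setIntegral_nonneg (μ := volume) measurableSet_Ioi fun t ht =>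
    mul_nonneg (le_of_lt ht) (hh₀ t ht)]
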